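/- Let n ≥ 2, γ, δ ∈ ℂ and c_1,…,c_n, d_1,…,d_{n−1} ∈ ℂ with Re(γ) > 0, Re(δ) > 0, Re(c_j) > 0 for 1 ≤ j ≤ n and Re(d_j) > 0 for 1 ≤ j ≤ n−1; set d_0 = 0. Then, integrating each variable over the imaginary axis: (1/(4πi)^{n−1})·∫_{z_1,…,z_{n−1}} ∏_{j=1}^{n−1} Γ_ℝ(c_j+z_j)·Γ_ℝ(c_{j+1}+γ+z_j)·Γ_ℝ(d_{j−1}+δ−z_j)·Γ_ℝ(d_j−z_j) dz_1⋯dz_{n−1} = [Γ_ℝ(c_1+δ)·Γ_ℝ(c_n+d_{n−1}+γ) / (Γ_ℝ(c_1+γ)·Γ_ℝ(c_n+d_{n−1}+δ))] · (1/(4πi)^{n−1})·∫_{z_1,…,z_{n−1}} ∏_{j=1}^{n−1} Γ_ℝ(c_j+z_j)·Γ_ℝ(c_{j+1}+δ+z_j)·Γ_ℝ(d_{j−1}+γ−z_j)·Γ_ℝ(d_j−z_j) dz_1⋯dz_{n−1}. -/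

import Mathlib

open MeasureTheory Complex

noncomputable section

/-- `Γ_ℝ(s) = π^{-s/2} Γ(s/2)`. -/
def GammaR (s : ℂ) : ℂ := (Real.pi : ℂ) ^ (-s / 2) * Complex.Gamma (s / 2)

/-- Modified Bessel function of the second kind, via its integral representation. -/
def BesselK (ν : ℂ) (y : ℝ) : ℂ :=
  (1 / 2) * ∫ t in Set.Ioi (0 : ℝ),
    Complex.exp (-((y : ℂ) / 2) * ((t : ℂ) + 1 / (t : ℂ))) * (t : ℂ) ^ ν / (t : ℂ)

/-- Extend a finite real tuple to `ℕ`, defaulting to `1`. -/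
def extR {k : ℕ} (t : Fin k → ℝ) : ℕ → ℝ := fun i => if h : i < k then t ⟨i, h⟩ else 1

/-- Extend a finite real tuple to `ℕ`, defaulting to `0`. -/
def extR0 {k : ℕ} (t : Fin k → ℝ) : ℕ → ℝ := fun i => if h : i < k then t ⟨i, h⟩ else 0

/-- The positive orthant. -/
def posSet (k : ℕ) : Set (Fin k → ℝ) := {t | ∀ j, 0 < t j}

/-- `|a| = a_1 + ⋯ + a_n` (0-based indexing). -/
def sumA (n : ℕ) (a : ℕ → ℂ) : ℂ := ∑ j ∈ Finset.range n, a j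

/-- `ã_j = a_{j+1} + a_1/(n-1)` (0-based indexing). -/
def tildeA (n : ℕ) (a : ℕ → ℂ) : ℕ → ℂ := fun j => a (j + 1) + a 0 / ((n : ℂ) - 1)

/-- The normalized radial part `Ŵ^A_{n,a}` of the class one `GL_n(ℝ)` Whittaker function,
as a function of `(y_1,…,y_{n-1})` (0-based indexing). -/
def WhittAr : ℕ → (ℕ → ℂ) → (ℕ → ℝ) → ℂ
  | 0, _, _ => 1
  | 1, _, _ => 1
  | 2, a, y => 2 * ((y 0 : ℂ) ^ ((a 0 + a 1) / 2)) *
      BesselK ((a 0 - a 1) / 2) (2 * Real.pi * y 0)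
  | (n + 3), a, y =>
      ∫ t in posSet (n + 2),
        WhittAr (n + 2) (tildeA (n + 3) a)
            (fun j => y (j + 1) * Real.sqrt (extR t (j + 1) / extR t j)) *
          (∏ j ∈ Finset.range (n + 2),
            Complex.exp (((-(Real.pi * y j) ^ 2 * extR t j - 1 / extR t j : ℝ) : ℂ)) *
              ((Real.pi * y j : ℝ) : ℂ) ^ ((((n + 2 - j : ℕ) : ℂ) * a 0) / ((n + 2 : ℕ) : ℂ)) *
              ((extR t j : ℝ) : ℂ) ^ ((((n + 3 : ℕ) : ℂ) * a 0) / (2 * ((n + 2 : ℕ) : ℂ)))) *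
          ((Real.pi * extR t (n + 1) : ℝ) : ℂ) ^ (-(sumA (n + 3) a) / 2) *
          (∏ j ∈ Finset.range (n + 2), ((extR t j : ℝ) : ℂ))⁻¹

/-- `Ŵ^A_{n,a}` as a function of the full tuple `(y_1,…,y_n)`. -/
def WhittAhat (n : ℕ) (a : ℕ → ℂ) (y : ℕ → ℝ) : ℂ :=
  ((y (n - 1) : ℝ) : ℂ) ^ sumA n a * WhittAr n a y

/-- The Mellin transform `U_{n,a}` (0-based: `s j` stands for `s_{j+1}`). -/
def Ufun (n : ℕ) (a : ℕ → ℂ) (s : ℕ → ℂ) : ℂ :=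
  ∫ y in posSet (n - 1),
    WhittAr n a (extR y) *
      ∏ j ∈ Finset.range (n - 1), ((extR y j : ℝ) : ℂ) ^ s j / ((extR y j : ℝ) : ℂ)

/-- The normalized radial part `Ŵ^B_{n,b}` of the class one `SO_{2n+1}(ℝ)` Whittaker function. -/
def WhittBr : ℕ → (ℕ → ℂ) → (ℕ → ℝ) → ℂ
  | 0, _, _ => 1
  | 1, b, y => 2 * BesselK (b 0 / 2) (2 * Real.pi * y 0)
  | (n + 2), b, y =>
      ∫ p in (posSet (n + 2) ×ˢ posSet (n + 1)),
        WhittBr (n + 1) b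
            (fun j =>
              if j < n then
                y (j + 1) *
                  Real.sqrt (extR p.1 (j + 1) * extR p.2 (j + 1) /
                    (extR p.1 (j + 2) * extR p.2 j))
              else y (n + 1) * Real.sqrt (extR p.1 (n + 1) / extR p.2 n)) *
          (∏ j ∈ Finset.range (n + 2),
            Complex.exp (((-(Real.pi * y j) ^ 2 * extR p.1 j - 1 / extR p.1 j : ℝ) : ℂ)) *
              ((Real.pi * y j : ℝ) : ℂ) ^ b (n + 1)) *
          (∏ j ∈ Finset.range (n + 1),
            Complex.exp (((-(Real.pi * y j) ^ 2 * (extR p.1 j / extR p.1 (j + 1)) * extR p.2 j -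
                  1 / extR p.2 j : ℝ) : ℂ)) *
              ((extR p.1 (j + 1) * extR p.2 j : ℝ) : ℂ) ^ (b (n + 1) / 2)) *
          ((extR p.1 0 : ℝ) : ℂ) ^ b (n + 1) *
          (∏ j ∈ Finset.range (n + 1), ((extR p.2 j : ℝ) : ℂ))⁻¹ *
          (∏ j ∈ Finset.range (n + 2), ((extR p.1 j : ℝ) : ℂ))⁻¹

/-- The Mellin transform `V_{n,b}` (0-based: `s j` stands for `s_{j+1}`). -/
def Vfun (n : ℕ) (b : ℕ → ℂ) (s : ℕ → ℂ) : ℂ :=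
  ∫ y in posSet n,
    WhittBr n b (extR y) *
      ∏ j ∈ Finset.range n, ((extR y j : ℝ) : ℂ) ^ s j / ((extR y j : ℝ) : ℂ)

/-- Integral over the vertical line `Re z = c`, i.e. `i·∫_ℝ f(c+it) dt`. -/
def VInt (c : ℝ) (f : ℂ → ℂ) : ℂ := Complex.I * ∫ t : ℝ, f (c + t * Complex.I)

/-- Iterated integral over `k` vertical lines with abscissas `c 0, …, c (k-1)`;
the integrand is fed the contour points as a 0-based sequence. -/
def VIntK (k : ℕ) (c : ℕ → ℝ) (f : (ℕ → ℂ) → ℂ) : ℂ :=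
  Complex.I ^ k * ∫ t : Fin k → ℝ, f (fun i => (c i : ℂ) + (extR0 t i : ℝ) * Complex.I)

/-! Against a product integrand the iterated integral factors into one-variable Barnes integrals,
which Barnes' first lemma evaluates. Interchanging `γ` and `δ` multiplies the `j`-th of them by
`R (j - 1) / R j`, where `R j = Γ_ℝ(c_{j+1} + d_j + δ) / Γ_ℝ(c_{j+1} + d_j + γ)`, and the product of
these factors telescopes.

Barnes' first lemma is Parseval's formula: the Fourier transform of `t ↦ σ(t)^u σ(-t)^v`, with `σ`
the logistic function, is a Beta function on a vertical line. -/

section Parseval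

open scoped FourierTransform

variable {V : Type*} [NormedAddCommGroup V] [InnerProductSpace ℝ V] [FiniteDimensional ℝ V]
  [MeasurableSpace V] [BorelSpace V]

lemma fourier_fourier_apply {g : V → ℂ} (hg : Continuous g) (hg_int : Integrable g)
    (hFg : Integrable (𝓕 g)) (x : V) : 𝓕 (𝓕 g) x = g (-x) := by
  rw [← neg_neg x, ← Real.fourierInv_eq_fourier_neg, hg.fourierInv_fourier_eq hg_int hFg, neg_neg]

lemma integral_fourier_mul_fourier {f g : V → ℂ} (hf : Integrable f) (hg : Continuous g)
    (hg_int : Integrable g) (hFg : Integrable (𝓕 g)) :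
    ∫ ξ, 𝓕 f ξ * 𝓕 g ξ = ∫ x, f x * g (-x) := by
  have hself : ∫ ξ, 𝓕 f ξ * 𝓕 g ξ = ∫ x, f x * 𝓕 (𝓕 g) x := by
    simpa using! VectorFourier.integral_fourierIntegral_smul_eq_flip (L := innerₗ V)
      Real.continuous_fourierChar continuous_inner hf hFg
  simpa only [fourier_fourier_apply hg hg_int hFg] using hself

end Parseval

section SigmoidKernel

open scoped FourierTransform

/-- The function `t ↦ σ(t)^u σ(-t)^v`, where `σ` is the logistic function: the integrand of the
Beta integral after the substitution `x = σ(t)`. -/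
def sigmoidKernel (u v : ℂ) (t : ℝ) : ℂ :=
  (Real.sigmoid t : ℂ) ^ u * (Real.sigmoid (-t) : ℂ) ^ v

lemma ofReal_sigmoid_ne_zero (t : ℝ) : (Real.sigmoid t : ℂ) ≠ 0 :=
  ofReal_ne_zero.2 (Real.sigmoid_pos t).ne'

lemma continuous_sigmoidKernel (u v : ℂ) : Continuous (sigmoidKernel u v) := by
  have hpow (w : ℂ) : Continuous fun t : ℝ => (Real.sigmoid t : ℂ) ^ w :=
    (continuous_ofReal.comp continuous_sigmoid).cpow continuous_const
      fun t => ofReal_mem_slitPlane.2 (Real.sigmoid_pos t)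
  exact (hpow u).mul ((hpow v).comp continuous_neg)

lemma sigmoidKernel_mul_sigmoidKernel_neg (a b c d : ℂ) (t : ℝ) :
    sigmoidKernel a c t * sigmoidKernel b d (-t) = sigmoidKernel (a + d) (b + c) t := by
  simp only [sigmoidKernel, neg_neg, cpow_add _ _ (ofReal_sigmoid_ne_zero _)]
  ring

lemma log_sigmoid_sub_log_sigmoid_neg (t : ℝ) :
    Real.log (Real.sigmoid t) - Real.log (Real.sigmoid (-t)) = t := by
  rw [← Real.sigmoid_mul_rexp_neg, Real.log_mul (Real.sigmoid_pos t).ne' (Real.exp_ne_zero _),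
    Real.log_exp]
  ring

lemma exp_mul_sigmoidKernel (u v z : ℂ) (t : ℝ) :
    cexp (z * t) * sigmoidKernel u v t = sigmoidKernel (u + z) (v - z) t := by
  have ht : (t : ℂ) = Real.log (Real.sigmoid t) - Real.log (Real.sigmoid (-t)) := by
    exact_mod_cast (log_sigmoid_sub_log_sigmoid_neg t).symm
  simp only [sigmoidKernel, cpow_def_of_ne_zero (ofReal_sigmoid_ne_zero _),
    ← ofReal_log (Real.sigmoid_nonneg _), ← Complex.exp_add]
  rw [ht]
  ring_nf

lemma abs_deriv_sigmoid_smul_beta (u v : ℂ) (t : ℝ) :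
    |Real.sigmoid t * (1 - Real.sigmoid t)| •
      ((Real.sigmoid t : ℂ) ^ (u - 1) * (1 - (Real.sigmoid t : ℂ)) ^ (v - 1)) =
      sigmoidKernel u v t := by
  have hneg : 1 - (Real.sigmoid t : ℂ) = (Real.sigmoid (-t) : ℂ) := by
    rw [Real.sigmoid_neg, ofReal_sub, ofReal_one]
  have h₁ := ofReal_sigmoid_ne_zero t
  have h₂ := ofReal_sigmoid_ne_zero (-t)
  rw [← Real.sigmoid_neg, abs_of_pos (mul_pos (Real.sigmoid_pos _) (Real.sigmoid_pos _)), hneg,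
    sigmoidKernel, cpow_sub _ _ h₁, cpow_sub _ _ h₂, cpow_one, cpow_one, real_smul, ofReal_mul]
  field_simp

lemma integrable_sigmoidKernel {u v : ℂ} (hu : 0 < u.re) (hv : 0 < v.re) :
    Integrable (sigmoidKernel u v) := by
  have h := (intervalIntegrable_iff_integrableOn_Ioo_of_le zero_le_one).1
    (betaIntegral_convergent hu hv)
  rw [← Real.range_sigmoid, ← Set.image_univ,
    integrableOn_image_iff_integrableOn_abs_deriv_smul MeasurableSet.univ
      (fun t _ => (Real.hasDerivAt_sigmoid t).hasDerivWithinAt) Real.sigmoid_injective.injOn,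
    integrableOn_univ] at h
  simpa only [abs_deriv_sigmoid_smul_beta] using h

lemma integral_sigmoidKernel (u v : ℂ) : ∫ t, sigmoidKernel u v t = betaIntegral u v := by
  rw [betaIntegral, intervalIntegral.integral_of_le zero_le_one, integral_Ioc_eq_integral_Ioo,
    ← Real.range_sigmoid, ← Set.image_univ,
    integral_image_eq_integral_abs_deriv_smul MeasurableSet.univ
      (fun t _ => (Real.hasDerivAt_sigmoid t).hasDerivWithinAt) Real.sigmoid_injective.injOn,
    setIntegral_univ]
  simp only [abs_deriv_sigmoid_smul_beta]

lemma fourier_sigmoidKernel (u v : ℂ) (ξ : ℝ) :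
    𝓕 (sigmoidKernel u v) ξ =
      betaIntegral (u + (-(2 * Real.pi) * ξ : ℝ) * I) (v - (-(2 * Real.pi) * ξ : ℝ) * I) := by
  rw [Real.fourier_real_eq_integral_exp_smul, ← integral_sigmoidKernel]
  congr 1 with t
  rw [smul_eq_mul, ← exp_mul_sigmoidKernel]
  push_cast
  ring_nf

lemma mul_mul_betaIntegral_eq_betaIntegral_add_one {u v : ℂ} (hu : 0 < u.re) (hv : 0 < v.re) :
    u * v * betaIntegral u v = (u + v) * (u + v + 1) * betaIntegral (u + 1) (v + 1) := by
  have huv : 0 < (u + v).re := add_pos hu hv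
  have huv₁ : 0 < (u + v + 1).re := add_pos huv one_pos
  have h := Gamma_mul_Gamma_eq_betaIntegral hu hv
  have h₁ := Gamma_mul_Gamma_eq_betaIntegral (s := u + 1) (t := v + 1)
    (add_pos hu one_pos) (add_pos hv one_pos)
  rw [show u + 1 + (v + 1) = u + v + 1 + 1 by ring, Gamma_add_one _ (ne_zero_of_re_pos hu),
    Gamma_add_one _ (ne_zero_of_re_pos hv), Gamma_add_one _ (ne_zero_of_re_pos huv₁),
    Gamma_add_one _ (ne_zero_of_re_pos huv)] at h₁
  apply mul_left_cancel₀ (Gamma_ne_zero_of_re_pos huv)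
  linear_combination h₁ - u * v * h

lemma memLp_two_inv_add_mul_I {u : ℂ} (hu : u.re ≠ 0) {k : ℝ} (hk : k ≠ 0) :
    MemLp (fun ξ : ℝ => (u + (k * ξ : ℝ) * I)⁻¹) 2 := by
  have hmeas : Measurable fun ξ : ℝ => (u + (k * ξ : ℝ) * I)⁻¹ := by fun_prop
  rw [memLp_two_iff_integrable_sq_norm hmeas.aestronglyMeasurable]
  have h := ((integrable_inv_one_add_sq.comp_div hu).comp_add_left u.im).comp_mul_left' hk
  refine (h.const_mul (u.re ^ 2)⁻¹).congr (.of_forall fun ξ => ?_)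
  have hnorm : ‖u + (k * ξ : ℝ) * I‖ ^ 2 = u.re ^ 2 + (u.im + k * ξ) ^ 2 := by
    rw [← normSq_eq_norm_sq, normSq_apply]
    simp [sq]
  simp only [norm_inv, inv_pow, hnorm, ← mul_inv]
  field_simp

lemma fourier_sigmoidKernel_eq_mul_fourier {u v : ℂ} (hu : 0 < u.re) (hv : 0 < v.re) (ξ : ℝ) :
    𝓕 (sigmoidKernel u v) ξ = (u + v) * (u + v + 1) * (𝓕 (sigmoidKernel (u + 1) (v + 1)) ξ *
      ((u + (-(2 * Real.pi) * ξ : ℝ) * I)⁻¹ * (v + (2 * Real.pi * ξ : ℝ) * I)⁻¹)) := by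
  set τ : ℝ := -(2 * Real.pi) * ξ with hτ
  have hτ_neg : v + (2 * Real.pi * ξ : ℝ) * I = v - τ * I := by
    rw [hτ]
    push_cast
    ring
  have hu' : 0 < (u + τ * I).re := by simpa using hu
  have hv' : 0 < (v - τ * I).re := by simpa using hv
  have hrec := mul_mul_betaIntegral_eq_betaIntegral_add_one hu' hv'
  rw [add_add_sub_cancel, add_right_comm u (τ * I), sub_add_eq_add_sub] at hrec
  rw [fourier_sigmoidKernel, fourier_sigmoidKernel, hτ_neg, ← hτ, ← mul_assoc, ← hrec, ← mul_inv,
    mul_right_comm, mul_inv_cancel₀ (mul_ne_zero (ne_zero_of_re_pos hu') (ne_zero_of_re_pos hv')),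
    one_mul]

/-- Raising `u` and `v` by one gains the factor `|ξ|⁻²` needed for integrability at infinity. -/
lemma integrable_fourier_sigmoidKernel {u v : ℂ} (hu : 0 < u.re) (hv : 0 < v.re) :
    Integrable (𝓕 (sigmoidKernel u v)) := by
  have hpi : 2 * Real.pi ≠ 0 := by positivity
  have hint : Integrable (sigmoidKernel (u + 1) (v + 1)) :=
    integrable_sigmoidKernel (add_pos hu one_pos) (add_pos hv one_pos)
  have hcont : Continuous (𝓕 (sigmoidKernel (u + 1) (v + 1))) :=
    VectorFourier.fourierIntegral_continuous Real.continuous_fourierChar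
      (L := innerₗ ℝ) continuous_inner hint
  have hbound (ξ : ℝ) : ‖𝓕 (sigmoidKernel (u + 1) (v + 1)) ξ‖ ≤
      ∫ t, ‖sigmoidKernel (u + 1) (v + 1) t‖ :=
    VectorFourier.norm_fourierIntegral_le_integral_norm _ _ _ _ _
  have hdecay := (memLp_two_inv_add_mul_I hu.ne' (neg_ne_zero.2 hpi)).integrable_mul
    (memLp_two_inv_add_mul_I hv.ne' hpi)
  exact ((hdecay.bdd_mul hcont.aestronglyMeasurable (.of_forall hbound)).const_mul
    ((u + v) * (u + v + 1))).congr
      (.of_forall fun ξ => (fourier_sigmoidKernel_eq_mul_fourier hu hv ξ).symm)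

end SigmoidKernel

section BarnesFirstLemma

variable {a b c d : ℂ}

lemma integral_betaIntegral_mul_betaIntegral
    (ha : 0 < a.re) (hb : 0 < b.re) (hc : 0 < c.re) (hd : 0 < d.re) :
    ∫ t : ℝ, betaIntegral (a + t * I) (c - t * I) * betaIntegral (b + t * I) (d - t * I) =
      2 * Real.pi * betaIntegral (a + d) (b + c) := by
  have hparseval := integral_fourier_mul_fourier (integrable_sigmoidKernel ha hc)
    (continuous_sigmoidKernel b d) (integrable_sigmoidKernel hb hd)
    (integrable_fourier_sigmoidKernel hb hd)
  simp only [fourier_sigmoidKernel, sigmoidKernel_mul_sigmoidKernel_neg,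
    integral_sigmoidKernel] at hparseval
  have hpi : (Real.pi : ℂ) ≠ 0 := ofReal_ne_zero.2 Real.pi_ne_zero
  rw [← hparseval, Measure.integral_comp_mul_left fun t : ℝ =>
    betaIntegral (a + t * I) (c - t * I) * betaIntegral (b + t * I) (d - t * I),
    abs_inv, abs_neg, abs_of_pos Real.two_pi_pos, real_smul, ofReal_inv, ofReal_mul, ofReal_ofNat,
    mul_inv_cancel_left₀ (mul_ne_zero two_ne_zero hpi)]

/-- **Barnes' first lemma**. -/
theorem integral_Gamma_mul_Gamma_mul_Gamma_mul_Gamma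
    (ha : 0 < a.re) (hb : 0 < b.re) (hc : 0 < c.re) (hd : 0 < d.re) :
    ∫ t : ℝ, Gamma (a + t * I) * Gamma (b + t * I) * Gamma (c - t * I) * Gamma (d - t * I) =
      2 * Real.pi * (Gamma (a + c) * Gamma (a + d) * Gamma (b + c) * Gamma (b + d) /
        Gamma (a + b + c + d)) := by
  have hbeta (t : ℝ) :
      Gamma (a + t * I) * Gamma (b + t * I) * Gamma (c - t * I) * Gamma (d - t * I) =
        Gamma (a + c) * Gamma (b + d) *
          (betaIntegral (a + t * I) (c - t * I) * betaIntegral (b + t * I) (d - t * I)) := by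
    have hac := Gamma_mul_Gamma_eq_betaIntegral (s := a + t * I) (t := c - t * I)
      (by simpa using ha) (by simpa using hc)
    have hbd := Gamma_mul_Gamma_eq_betaIntegral (s := b + t * I) (t := d - t * I)
      (by simpa using hb) (by simpa using hd)
    rw [add_add_sub_cancel] at hac hbd
    rw [mul_mul_mul_comm, ← hac, ← hbd]
    ring
  have hadbc := Gamma_mul_Gamma_eq_betaIntegral (s := a + d) (t := b + c)
    (add_pos ha hd) (add_pos hb hc)
  have hne : Gamma (a + b + c + d) ≠ 0 :=
    Gamma_ne_zero_of_re_pos (add_pos (add_pos (add_pos ha hb) hc) hd)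
  rw [show a + d + (b + c) = a + b + c + d by ring] at hadbc
  simp only [hbeta]
  rw [integral_const_mul, integral_betaIntegral_mul_betaIntegral ha hb hc hd,
    eq_div_of_mul_eq hne ((mul_comm _ _).trans hadbc.symm)]
  ring

end BarnesFirstLemma

section GammaR

lemma GammaR_ne_zero_of_re_pos {s : ℂ} (hs : 0 < s.re) : GammaR s ≠ 0 :=
  Gammaℝ_ne_zero_of_re_pos hs

lemma GammaR_mul_GammaR_mul_GammaR_mul_GammaR (s₁ s₂ s₃ s₄ : ℂ) :
    GammaR s₁ * GammaR s₂ * GammaR s₃ * GammaR s₄ =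
      (Real.pi : ℂ) ^ (-(s₁ + s₂ + s₃ + s₄) / 2) *
        (Gamma (s₁ / 2) * Gamma (s₂ / 2) * Gamma (s₃ / 2) * Gamma (s₄ / 2)) := by
  have hpi : (Real.pi : ℂ) ≠ 0 := ofReal_ne_zero.2 Real.pi_ne_zero
  simp only [GammaR, neg_add, add_div, cpow_add _ _ hpi]
  ring

/-- The Barnes integral `∫ Γ_ℝ(a+z) Γ_ℝ(b+z) Γ_ℝ(c-z) Γ_ℝ(d-z) dz` over the imaginary axis, the
one-variable factor of the iterated integrals below. -/
def barnesIntegral (a b c d : ℂ) : ℂ :=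
  VInt 0 fun z => GammaR (a + z) * GammaR (b + z) * GammaR (c - z) * GammaR (d - z)

variable {a b c d γ δ : ℂ}

lemma barnesIntegral_eq_integral_Gamma (a b c d : ℂ) :
    barnesIntegral a b c d = 2 * I * ((Real.pi : ℂ) ^ (-(a + b + c + d) / 2) *
      ∫ t : ℝ, Gamma (a / 2 + t * I) * Gamma (b / 2 + t * I) * Gamma (c / 2 - t * I) *
        Gamma (d / 2 - t * I)) := by
  have hscale (t : ℝ) : GammaR (a + (2 * t : ℝ) * I) * GammaR (b + (2 * t : ℝ) * I) *
      GammaR (c - (2 * t : ℝ) * I) * GammaR (d - (2 * t : ℝ) * I) =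
        (Real.pi : ℂ) ^ (-(a + b + c + d) / 2) *
          (Gamma (a / 2 + t * I) * Gamma (b / 2 + t * I) * Gamma (c / 2 - t * I) *
            Gamma (d / 2 - t * I)) := by
    have hadd (s : ℂ) : (s + (2 * t : ℝ) * I) / 2 = s / 2 + t * I := by push_cast; ring
    have hsub (s : ℂ) : (s - (2 * t : ℝ) * I) / 2 = s / 2 - t * I := by push_cast; ring
    rw [GammaR_mul_GammaR_mul_GammaR_mul_GammaR, hadd, hadd, hsub, hsub]
    congr 3
    ring
  simp only [barnesIntegral, VInt, ofReal_zero, zero_add]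
  rw [← integral_const_mul ((Real.pi : ℂ) ^ (-(a + b + c + d) / 2))]
  simp only [← hscale]
  rw [Measure.integral_comp_mul_left (fun t : ℝ => GammaR (a + t * I) * GammaR (b + t * I) *
      GammaR (c - t * I) * GammaR (d - t * I)) 2,
    abs_of_pos (by positivity), real_smul, ofReal_inv, ofReal_ofNat]
  ring

theorem barnesIntegral_eq (ha : 0 < a.re) (hb : 0 < b.re) (hc : 0 < c.re) (hd : 0 < d.re) :
    barnesIntegral a b c d = 4 * Real.pi * I *
      (GammaR (a + c) * GammaR (a + d) * GammaR (b + c) * GammaR (b + d) /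
        GammaR (a + b + c + d)) := by
  have half {s : ℂ} (hs : 0 < s.re) : 0 < (s / 2).re := by simpa using hs
  have hpi : (Real.pi : ℂ) ≠ 0 := ofReal_ne_zero.2 Real.pi_ne_zero
  have hexp : -(a + c + (a + d) + (b + c) + (b + d)) / 2 =
      -(a + b + c + d) / 2 + -(a + b + c + d) / 2 := by ring
  rw [barnesIntegral_eq_integral_Gamma, integral_Gamma_mul_Gamma_mul_Gamma_mul_Gamma
    (half ha) (half hb) (half hc) (half hd), GammaR_mul_GammaR_mul_GammaR_mul_GammaR, GammaR, hexp,
    cpow_add _ _ hpi]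
  simp only [add_div]
  field_simp
  ring

lemma barnesIntegral_swap (ha : 0 < a.re) (hd : 0 < d.re)
    (hbγ : 0 < (b + γ).re) (hbδ : 0 < (b + δ).re) (hcγ : 0 < (c + γ).re) (hcδ : 0 < (c + δ).re) :
    barnesIntegral a (b + γ) (c + δ) d =
      GammaR (a + c + δ) / GammaR (a + c + γ) / (GammaR (b + d + δ) / GammaR (b + d + γ)) *
        barnesIntegral a (b + δ) (c + γ) d := by
  have hacγ : GammaR (a + c + γ) ≠ 0 :=
    GammaR_ne_zero_of_re_pos (by rw [add_assoc]; exact add_pos ha hcγ)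
  have hbdδ : GammaR (b + d + δ) ≠ 0 :=
    GammaR_ne_zero_of_re_pos (by rw [add_right_comm]; exact add_pos hbδ hd)
  rw [barnesIntegral_eq ha hbγ hcδ hd, barnesIntegral_eq ha hbδ hcγ hd,
    show a + (b + γ) + (c + δ) + d = a + (b + δ) + (c + γ) + d by ring,
    show b + γ + (c + δ) = b + δ + (c + γ) by ring, ← add_assoc a c, ← add_assoc a c,
    add_right_comm b γ d, add_right_comm b δ d]
  field_simp

end GammaR

section IteratedIntegral

lemma VIntK_prod (k : ℕ) (σ : ℕ → ℝ) (F : ℕ → ℂ → ℂ) :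
    VIntK k σ (fun z => ∏ j ∈ Finset.range k, F j (z j)) =
      ∏ j ∈ Finset.range k, VInt (σ j) (F j) := by
  simp only [VIntK, VInt, Finset.prod_mul_distrib, Finset.prod_const, Finset.card_range,
    Finset.prod_range, ← integral_fintype_prod_volume_eq_prod]
  simp [extR0]

lemma VIntK_prod_Icc_eq_prod_barnesIntegral (k : ℕ) (γ δ : ℂ) (c d : ℕ → ℂ) :
    VIntK k (fun _ => 0) (fun z => ∏ j ∈ Finset.Icc 1 k,
        GammaR (c j + z (j - 1)) * GammaR (c (j + 1) + γ + z (j - 1)) *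
          GammaR (d (j - 1) + δ - z (j - 1)) * GammaR (d j - z (j - 1))) =
      ∏ j ∈ Finset.range k, barnesIntegral (c (j + 1)) (c (j + 2) + γ) (d j + δ) (d (j + 1)) := by
  simp only [barnesIntegral, ← VIntK_prod, ← Finset.Ico_add_one_right_eq_Icc,
    Finset.prod_Ico_eq_prod_range, add_tsub_cancel_right, add_comm 1]

lemma prod_range_div_of_ne_zero {K : Type*} [Field K] {f : ℕ → K} {k : ℕ}
    (hf : ∀ j ≤ k, f j ≠ 0) : ∏ j ∈ Finset.range k, f j / f (j + 1) = f 0 / f k := by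
  induction k with
  | zero => simp [hf 0 le_rfl]
  | succ k ih =>
    rw [Finset.prod_range_succ, ih fun j hj => hf j (hj.trans k.le_succ),
      div_mul_div_cancel₀ (hf k k.le_succ)]

theorem prod_barnesIntegral_swap {k : ℕ} {γ δ : ℂ} {c d : ℕ → ℂ}
    (hγ : 0 < γ.re) (hδ : 0 < δ.re) (hd₀γ : 0 < (d 0 + γ).re) (hd₀δ : 0 < (d 0 + δ).re)
    (hc : ∀ j ≤ k, 0 < (c (j + 1)).re) (hd : ∀ j < k, 0 < (d (j + 1)).re) :
    ∏ j ∈ Finset.range k, barnesIntegral (c (j + 1)) (c (j + 2) + γ) (d j + δ) (d (j + 1)) =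
      GammaR (c 1 + d 0 + δ) / GammaR (c 1 + d 0 + γ) /
          (GammaR (c (k + 1) + d k + δ) / GammaR (c (k + 1) + d k + γ)) *
        ∏ j ∈ Finset.range k,
          barnesIntegral (c (j + 1)) (c (j + 2) + δ) (d j + γ) (d (j + 1)) := by
  have hd_add {ε : ℂ} (hε : 0 < ε.re) (hd₀ : 0 < (d 0 + ε).re) :
      ∀ j ≤ k, 0 < (d j + ε).re
    | 0, _ => hd₀
    | j + 1, hj => add_pos (hd j hj) hε
  let R (j : ℕ) : ℂ := GammaR (c (j + 1) + d j + δ) / GammaR (c (j + 1) + d j + γ)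
  have hR_ne_zero (j : ℕ) (hj : j ≤ k) : R j ≠ 0 := by
    have hne {ε : ℂ} (hε : 0 < (d j + ε).re) : GammaR (c (j + 1) + d j + ε) ≠ 0 :=
      GammaR_ne_zero_of_re_pos (by rw [add_assoc]; exact add_pos (hc j hj) hε)
    exact div_ne_zero (hne (hd_add hδ hd₀δ j hj)) (hne (hd_add hγ hd₀γ j hj))
  have hswap (j : ℕ) (hj : j < k) :
      barnesIntegral (c (j + 1)) (c (j + 2) + γ) (d j + δ) (d (j + 1)) =
        R j / R (j + 1) * barnesIntegral (c (j + 1)) (c (j + 2) + δ) (d j + γ) (d (j + 1)) :=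
    barnesIntegral_swap (hc j hj.le) (hd j hj) (add_pos (hc _ hj) hγ) (add_pos (hc _ hj) hδ)
      (hd_add hγ hd₀γ j hj.le) (hd_add hδ hd₀δ j hj.le)
  rw [Finset.prod_congr rfl fun j hj => hswap j (Finset.mem_range.1 hj), Finset.prod_mul_distrib,
    prod_range_div_of_ne_zero hR_ne_zero]

end IteratedIntegral

theorem barnes_iterated_identity_two_general
    (n : ℕ) (hn : 1 ≤ n) (γ δ : ℂ) (c d : ℕ → ℂ)
    (hγ : 0 < γ.re) (hδ : 0 < δ.re)
    (hd₀γ : 0 < (d 0 + γ).re) (hd₀δ : 0 < (d 0 + δ).re)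
    (hc : ∀ j, 1 ≤ j → j ≤ n → 0 < (c j).re)
    (hd : ∀ j, 1 ≤ j → j ≤ n - 1 → 0 < (d j).re) :
    ((4 * (Real.pi : ℂ) * Complex.I) ^ (n - 1))⁻¹ *
      VIntK (n - 1) (fun _ => 0) (fun z =>
        ∏ j ∈ Finset.Icc 1 (n - 1),
          GammaR (c j + z (j - 1)) * GammaR (c (j + 1) + γ + z (j - 1)) *
            GammaR (d (j - 1) + δ - z (j - 1)) * GammaR (d j - z (j - 1))) =
    GammaR (c 1 + d 0 + δ) * GammaR (c n + d (n - 1) + γ) /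
        (GammaR (c 1 + d 0 + γ) * GammaR (c n + d (n - 1) + δ)) *
      (((4 * (Real.pi : ℂ) * Complex.I) ^ (n - 1))⁻¹ *
        VIntK (n - 1) (fun _ => 0) (fun z =>
          ∏ j ∈ Finset.Icc 1 (n - 1),
            GammaR (c j + z (j - 1)) * GammaR (c (j + 1) + δ + z (j - 1)) *
              GammaR (d (j - 1) + γ - z (j - 1)) * GammaR (d j - z (j - 1)))) := by
  obtain ⟨k, rfl⟩ := Nat.exists_eq_add_of_le' hn
  rw [add_tsub_cancel_right] at hd ⊢
  rw [VIntK_prod_Icc_eq_prod_barnesIntegral, VIntK_prod_Icc_eq_prod_barnesIntegral,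
    prod_barnesIntegral_swap hγ hδ hd₀γ hd₀δ
      (fun j hj => hc (j + 1) j.succ_pos (Nat.succ_le_succ hj))
      (fun j hj => hd (j + 1) j.succ_pos hj),
    div_div_div_eq, mul_left_comm]

/-- Barnes-type lemma (Lemma 1.7(2) of Ishii–Stade). -/
theorem barnes_iterated_identity_two
    (n : ℕ) (hn : 2 ≤ n) (γ δ : ℂ) (c d : ℕ → ℂ)
    (hγ : 0 < γ.re) (hδ : 0 < δ.re)
    (hd0 : d 0 = 0)
    (hc : ∀ j, 1 ≤ j → j ≤ n → 0 < (c j).re)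
    (hd : ∀ j, 1 ≤ j → j ≤ n - 1 → 0 < (d j).re) :
    ((4 * (Real.pi : ℂ) * Complex.I) ^ (n - 1))⁻¹ *
      VIntK (n - 1) (fun _ => 0) (fun z =>
        ∏ j ∈ Finset.Icc 1 (n - 1),
          GammaR (c j + z (j - 1)) * GammaR (c (j + 1) + γ + z (j - 1)) *
            GammaR (d (j - 1) + δ - z (j - 1)) * GammaR (d j - z (j - 1))) =
    GammaR (c 1 + δ) * GammaR (c n + d (n - 1) + γ) /
        (GammaR (c 1 + γ) * GammaR (c n + d (n - 1) + δ)) *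
      (((4 * (Real.pi : ℂ) * Complex.I) ^ (n - 1))⁻¹ *
        VIntK (n - 1) (fun _ => 0) (fun z =>
          ∏ j ∈ Finset.Icc 1 (n - 1),
            GammaR (c j + z (j - 1)) * GammaR (c (j + 1) + δ + z (j - 1)) *
              GammaR (d (j - 1) + γ - z (j - 1)) * GammaR (d j - z (j - 1)))) := by
  simpa only [hd0, add_zero] using barnes_iterated_identity_two_general n (by lia) γ δ c d hγ hδ
    (by simpa [hd0] using hγ) (by simpa [hd0] using hδ) hc hd

end
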